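/- For n ≥ 3, the quotient rings R_n/I_{C_n} and R_{n+1}/P_n have the same Betti table: β_0(R_n/I_{C_n}) = 1 = β_0(R_{n+1}/P_n), and for every 1 ≤ i ≤ n−1, β_i(R_n/I_{C_n}) = i·C(n, i+1) = β_i(R_{n+1}/P_n) (binomial coefficient), while both Betti numbers vanish for i ≥ n. -/

import Mathlib

noncomputable section

open MvPolynomial

/-- Row of the Laplacian matrix of the `n`-cycle on `Fin n`
(vertex `j` of the paper corresponds to index `j-1`). -/
def cycLap (n : ℕ) [NeZero n] (j : Fin n) : Fin n → ℤ :=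
  fun l => if l = j then 2 else if l = j + 1 ∨ j = l + 1 then -1 else 0

/-- The cycle graph `C_n` on `Fin n`. -/
def cycleG (n : ℕ) [NeZero n] : SimpleGraph (Fin n) :=
  SimpleGraph.fromRel (fun i j => j = i + 1)

/-- The lattice ideal of a lattice `L ⊆ ℤ^n` in `K[x_1,…,x_n]`. -/
def latticeIdeal (n : ℕ) (K : Type*) [Field K] (L : Submodule ℤ (Fin n → ℤ)) :
    Ideal (MvPolynomial (Fin n) K) :=
  Ideal.span { f | ∃ u v : Fin n → ℕ,
    ((fun i => (u i : ℤ)) - fun i => (v i : ℤ)) ∈ L ∧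
    f = (∏ i, X i ^ u i) - ∏ i, X i ^ v i }

open Classical in
/-- The exponent vector of the monomial `x^{S → S̄}`: the `i`-th entry is the number
of edges of the cycle joining `i ∈ S` to the complement of `S`. -/
def outVec (n : ℕ) [NeZero n] (S : Set (Fin n)) (i : Fin n) : ℕ :=
  if i ∈ S then (if i + 1 ∈ S then 0 else 1) + (if i - 1 ∈ S then 0 else 1) else 0

/-- The monomial `x^{S → S̄}`. -/
def outMono (n : ℕ) (K : Type*) [NeZero n] [Field K] (S : Set (Fin n)) :
    MvPolynomial (Fin n) K :=
  ∏ i, X i ^ outVec n S i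

open Classical in
/-- `b_V = ∑_{j ∈ V} b_j`, sum of Laplacian rows over a set of vertices. -/
def bPart (n : ℕ) [NeZero n] (S : Set (Fin n)) : Fin n → ℤ :=
  ∑ j : Fin n, if j ∈ S then cycLap n j else 0

/-- The toppling ideal of the parcycle `(C_n, {V_1,…,V_k})`: the lattice ideal of the
lattice generated by the vectors `b_{V_j}`. -/
def topplingPar (n k : ℕ) (K : Type*) [NeZero n] [Field K] (V : Fin k → Set (Fin n)) :
    Ideal (MvPolynomial (Fin n) K) :=
  latticeIdeal n K (Submodule.span ℤ (Set.range fun j => bPart n (V j)))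

/-- `S` is a connected-parset of the parcycle `(C_n, V)`: a union of parts inducing a
connected subgraph of the cycle. -/
def isConnParset (n k : ℕ) [NeZero n] (V : Fin k → Set (Fin n)) (S : Set (Fin n)) : Prop :=
  (∃ T : Set (Fin k), S = ⋃ j ∈ T, V j) ∧ ((cycleG n).induce S).Connected

/-- The `G`-parking function ideal of a parcycle with sink part `V sink`. -/
def gparkIdeal (n k : ℕ) (K : Type*) [NeZero n] [Field K] (V : Fin k → Set (Fin n))
    (sink : Fin k) : Ideal (MvPolynomial (Fin n) K) :=
  Ideal.span { f | ∃ S : Set (Fin n), isConnParset n k V S ∧ ¬ V sink ⊆ S ∧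
    f = outMono n K S }

/-- The index in `Fin (n+1)` of the paper's variable `x_m`, `1 ≤ m ≤ n+1`. -/
def xIdx (n : ℕ) (m : ℕ) : Fin (n + 1) := ⟨(m - 1) % (n + 1), Nat.mod_lt _ (Nat.succ_pos n)⟩

/-- The defining ideal `P_n ⊆ K[x_1,…,x_{n+1}]` of the rational normal curve of degree `n`. -/
def Pideal (n : ℕ) (K : Type*) [Field K] : Ideal (MvPolynomial (Fin (n + 1)) K) :=
  Ideal.span { f | ∃ i j : ℕ, 2 ≤ i ∧ i ≤ j ∧ j ≤ n ∧
    f = X (xIdx n i) * X (xIdx n j) - X (xIdx n (i - 1)) * X (xIdx n (j + 1)) }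

open Classical in
/-- The `λ`-weight of an exponent vector. -/
def wdeg (n : ℕ) (lam : Fin n → ℕ) (u : Fin n →₀ ℕ) : ℕ := ∑ i, lam i * u i

open Classical in
/-- The `λ`-initial form of a polynomial: the sum of its terms of maximal `λ`-weight. -/
def initForm (n : ℕ) (K : Type*) [Field K] (lam : Fin n → ℕ) (f : MvPolynomial (Fin n) K) :
    MvPolynomial (Fin n) K :=
  ∑ u ∈ f.support.filter (fun u => wdeg n lam u = f.support.sup (wdeg n lam)),
    monomial u (coeff u f)

/-- The `λ`-initial ideal of an ideal. -/
def initIdeal (n : ℕ) (K : Type*) [Field K] (lam : Fin n → ℕ)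
    (I : Ideal (MvPolynomial (Fin n) K)) : Ideal (MvPolynomial (Fin n) K) :=
  Ideal.span { g | ∃ f ∈ I, f ≠ 0 ∧ g = initForm n K lam f }

open CategoryTheory in
/-- `Tor_i^{R}(R/𝔪, R/N)` as an `R`-module, for `R = K[x_1,…,x_m]` and `𝔪 = ⟨x_1,…,x_m⟩`. -/
def TorKN (m : ℕ) (K : Type*) [Field K] (i : ℕ) (N : Ideal (MvPolynomial (Fin m) K)) :
    ModuleCat (MvPolynomial (Fin m) K) :=
  ((Tor (ModuleCat (MvPolynomial (Fin m) K)) i).obj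
      (ModuleCat.of _ (MvPolynomial (Fin m) K ⧸ (Ideal.span (Set.range X) :
        Ideal (MvPolynomial (Fin m) K))))).obj
    (ModuleCat.of _ (MvPolynomial (Fin m) K ⧸ N))

section Helpers12
set_option linter.unusedSectionVars false
universe u
open CategoryTheory TensorProduct

section Hom
variable {R : Type u} [CommRing R] {M : Type u} [AddCommGroup M] [Module R M]
  (Q : Type u) [AddCommGroup Q] [Module R Q]
  (F : ℕ → Type u) [∀ i, AddCommGroup (F i)] [∀ i, Module R (F i)]
  [∀ i, Module.Projective R (F i)]
  (d : ∀ i, F (i+1) →ₗ[R] F i) (ε : F 0 →ₗ[R] M)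

/-- The chain complex of modules given by a sequence of maps. -/
def cplx (h2 : ∀ i, d i ∘ₗ d (i+1) = 0) : ChainComplex (ModuleCat.{u} R) ℕ :=
  ChainComplex.of (fun i => ModuleCat.of R (F i)) (fun i => ModuleCat.ofHom (d i))
    (fun i => by rw [← ModuleCat.ofHom_comp, h2]; rfl)

theorem cplx_d (h2 : ∀ i, d i ∘ₗ d (i+1) = 0) (i : ℕ) :
    (cplx F d h2).d (i+1) i = ModuleCat.ofHom (d i) :=
  ChainComplex.of_d (fun i => ModuleCat.of R (F i)) (fun i => ModuleCat.ofHom (d i)) i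

/-- The projective resolution given by an exact sequence. -/
def projRes (h2 : ∀ i, d i ∘ₗ d (i+1) = 0)
    (hex : ∀ i, Function.Exact (d (i+1)) (d i))
    (hε : Function.Exact (d 0) ε) (hs : Function.Surjective ε) :
    ProjectiveResolution (ModuleCat.of R M) where
  complex := cplx F d h2
  projective := fun n => by
    change Projective (ModuleCat.of R (F n))
    infer_instance
  π := (ChainComplex.toSingle₀Equiv _ _).symm ⟨ModuleCat.ofHom ε, by
    have : (cplx F d h2).d 1 0 = ModuleCat.ofHom (d 0) := cplx_d F d h2 _
    rw [this]
    ext x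
    exact hε.apply_apply_eq_zero x⟩
  quasiIso := ⟨fun n => by
    cases n
    · rw [ChainComplex.quasiIsoAt₀_iff, ShortComplex.quasiIso_iff_of_zeros']
      · let S : ShortComplex (ModuleCat.{u} R) := ShortComplex.mk (ModuleCat.ofHom (d 0))
          (ModuleCat.ofHom ε) (by ext x; exact hε.apply_apply_eq_zero x)
        have hS : S.Exact ∧ Epi S.g := by
          refine ⟨?_, ?_⟩
          · rw [ShortComplex.moduleCat_exact_iff]
            intro x hx
            exact (hε x).1 hx
          · rw [ModuleCat.epi_iff_surjective]; exact hs
        refine (ShortComplex.exact_and_epi_g_iff_of_iso ?_).2 hS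
        refine ShortComplex.isoMk (Iso.refl _) (Iso.refl _) (Iso.refl _) ?_ ?_
        · have : (cplx F d h2).d 1 0 = ModuleCat.ofHom (d 0) := cplx_d F d h2 _
          simp [S]
          exact this.symm
        · simp [S]
          rfl
      all_goals rfl
    · rename_i n
      rw [quasiIsoAt_iff_exactAt']
      · rw [HomologicalComplex.exactAt_iff' _ (n+1+1) (n+1) n (by simp) (by simp)]
        rw [ShortComplex.moduleCat_exact_iff]
        have e1 : (cplx F d h2).d (n+1+1) (n+1) = ModuleCat.ofHom (d (n+1)) :=
          cplx_d F d h2 _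
        have e2 : (cplx F d h2).d (n+1) n = ModuleCat.ofHom (d n) :=
          cplx_d F d h2 _
        intro x hx
        obtain ⟨y, hy⟩ := (hex n x).1 (by
          change ((cplx F d h2).d (n+1) n).hom x = 0 at hx
          rw [e2] at hx
          exact hx)
        refine ⟨y, ?_⟩
        change ((cplx F d h2).d (n+1+1) (n+1)).hom y = x
        rw [e1]
        exact hy
      · apply ChainComplex.exactAt_succ_single_obj⟩

theorem tor_succ (h2 : ∀ i, d i ∘ₗ d (i+1) = 0)
    (hex : ∀ i, Function.Exact (d (i+1)) (d i))
    (hε : Function.Exact (d 0) ε) (hs : Function.Surjective ε) (i : ℕ) :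
    Nonempty ((((Tor (ModuleCat.{u} R) (i+1)).obj (ModuleCat.of R Q)).obj (ModuleCat.of R M) : 
      ModuleCat.{u} R) ≃ₗ[R]
      (LinearMap.ker (LinearMap.lTensor Q (d i)) ⧸
        (LinearMap.range (LinearMap.lTensor Q (d (i+1)))).submoduleOf
          (LinearMap.ker (LinearMap.lTensor Q (d i))))) := by
  let P := projRes F d ε h2 hex hε hs
  let Fu := ((MonoidalCategory.tensoringLeft (ModuleCat.{u} R)).obj (ModuleCat.of R Q))
  let C := (Fu.mapHomologicalComplex (ComplexShape.down ℕ)).obj P.complex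
  let i1 := P.isoLeftDerivedObj Fu (i+1)
  let i2 : C.homology (i+1) ≅ (C.sc' (i+2) (i+1) i).homology :=
    ShortComplex.homologyMapIso (C.isoSc' (i+2) (i+1) i (by simp) (by simp))
  let i3 := (C.sc' (i+2) (i+1) i).moduleCatHomologyIso
  refine ⟨(i1 ≪≫ i2 ≪≫ i3).toLinearEquiv ≪≫ₗ ?_⟩
  have e1 : (cplx F d h2).d (i+1+1) (i+1) = ModuleCat.ofHom (d (i+1)) :=
    cplx_d F d h2 _
  have e2 : (cplx F d h2).d (i+1) i = ModuleCat.ofHom (d i) :=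
    cplx_d F d h2 _
  have e3 : (C.sc' (i+2) (i+1) i).g.hom = LinearMap.lTensor Q (d i) := by
    change (Fu.map ((cplx F d h2).d (i+1) i)).hom = _
    rw [e2]; rfl
  have e4 : (C.sc' (i+2) (i+1) i).f.hom = LinearMap.lTensor Q (d (i+1)) := by
    change (Fu.map ((cplx F d h2).d (i+1+1) (i+1))).hom = _
    rw [e1]; rfl
  refine Submodule.Quotient.equiv _ _ (LinearEquiv.ofEq _ _ (by rw [e3]; rfl)) ?_
  ext ⟨x, hx⟩
  simp only [Submodule.mem_map, LinearMap.mem_range, Submodule.submoduleOf, Submodule.mem_comap]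
  constructor
  · rintro ⟨_, ⟨z, rfl⟩, hz⟩
    refine ⟨z, ?_⟩
    rw [← e4]
    exact congrArg Subtype.val hz
  · rintro ⟨z, hz⟩
    refine ⟨_, ⟨z, rfl⟩, ?_⟩
    apply Subtype.ext
    rw [← e4] at hz
    exact hz

theorem tor_zero (h2 : ∀ i, d i ∘ₗ d (i+1) = 0)
    (hex : ∀ i, Function.Exact (d (i+1)) (d i))
    (hε : Function.Exact (d 0) ε) (hs : Function.Surjective ε) :
    Nonempty ((((Tor (ModuleCat.{u} R) 0).obj (ModuleCat.of R Q)).obj (ModuleCat.of R M) : 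
      ModuleCat.{u} R) ≃ₗ[R]
      ((Q ⊗[R] F 0) ⧸ (LinearMap.range (LinearMap.lTensor Q (d 0))))) := by
  let P := projRes F d ε h2 hex hε hs
  let Fu := ((MonoidalCategory.tensoringLeft (ModuleCat.{u} R)).obj (ModuleCat.of R Q))
  let C := (Fu.mapHomologicalComplex (ComplexShape.down ℕ)).obj P.complex
  let i1 := P.isoLeftDerivedObj Fu 0
  let i2 : C.homology 0 ≅ (C.sc' 1 0 0).homology :=
    ShortComplex.homologyMapIso (C.isoSc' 1 0 0 (by simp) (by simp))
  let i3 := (C.sc' 1 0 0).moduleCatHomologyIso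
  refine ⟨(i1 ≪≫ i2 ≪≫ i3).toLinearEquiv ≪≫ₗ ?_⟩
  have e1 : (cplx F d h2).d 1 0 = ModuleCat.ofHom (d 0) :=
    cplx_d F d h2 _
  have e3 : (C.sc' 1 0 0).g.hom = 0 := by
    change (C.d 0 0).hom = _
    rw [C.shape _ _ (by simp)]; rfl
  have e4 : (C.sc' 1 0 0).f.hom = LinearMap.lTensor Q (d 0) := by
    change (Fu.map ((cplx F d h2).d 1 0)).hom = _
    rw [e1]; rfl
  refine Submodule.Quotient.equiv _ _ (LinearEquiv.ofTop _ (by rw [e3]; exact LinearMap.ker_zero)) ?_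
  ext x
  simp only [Submodule.mem_map, LinearMap.mem_range]
  constructor
  · rintro ⟨_, ⟨z, rfl⟩, hz⟩
    refine ⟨z, ?_⟩
    rw [← e4]
    exact hz
  · rintro ⟨z, hz⟩
    refine ⟨_, ⟨z, rfl⟩, ?_⟩
    rw [← e4] at hz
    exact hz
end Hom

/-- `Idx j i` indexes the `i`-element subsets of a `j`-element set. -/
def Idx : ℕ → ℕ → Type
  | 0, 0 => Unit
  | 0, _ + 1 => Empty
  | j + 1, 0 => Idx j 0
  | j + 1, i + 1 => Idx j (i + 1) ⊕ Idx j i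

instance Idx.instUnique : ∀ j, Unique (Idx j 0)
  | 0 => inferInstanceAs (Unique Unit)
  | j + 1 => Idx.instUnique j

instance Idx.instFintype : ∀ j i, Fintype (Idx j i)
  | 0, 0 => inferInstanceAs (Fintype Unit)
  | 0, _ + 1 => inferInstanceAs (Fintype Empty)
  | j + 1, 0 => Idx.instFintype j 0
  | j + 1, i + 1 =>
    letI := Idx.instFintype j (i + 1)
    letI := Idx.instFintype j i
    inferInstanceAs (Fintype (Idx j (i + 1) ⊕ Idx j i))

instance Idx.instDecidableEq (j i : ℕ) : DecidableEq (Idx j i) := Classical.decEq _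

theorem Idx.card : ∀ j i, Fintype.card (Idx j i) = Nat.choose j i
  | 0, 0 => rfl
  | 0, _ + 1 => rfl
  | j + 1, 0 => by
    have := Idx.card j 0
    rw [Nat.choose_zero_right] at *
    exact this
  | j + 1, i + 1 => by
    have h1 := Idx.card j i
    have h2 := Idx.card j (i + 1)
    rw [Nat.choose_succ_succ, ← h1, ← h2]
    exact (Fintype.card_sum (α := Idx j (i + 1)) (β := Idx j i)).trans (add_comm _ _)

section Kos
variable {R : Type*} [CommRing R] {G G' : Type*} [AddCommGroup G] [Module R G]
  [AddCommGroup G'] [Module R G']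

/-- Restriction to the subsets not containing the last element. -/
def pl (R : Type*) [CommRing R] (G : Type*) [AddCommGroup G] [Module R G] (j i : ℕ) :
    (Idx (j + 1) (i + 1) → G) →ₗ[R] (Idx j (i + 1) → G) :=
  LinearMap.funLeft R G (fun x : Idx j (i + 1) => (Sum.inl x : Idx j (i + 1) ⊕ Idx j i))

/-- Restriction to the subsets containing the last element. -/
def pr (R : Type*) [CommRing R] (G : Type*) [AddCommGroup G] [Module R G] (j i : ℕ) :
    (Idx (j + 1) (i + 1) → G) →ₗ[R] (Idx j i → G) :=
  LinearMap.funLeft R G (fun x : Idx j i => (Sum.inr x : Idx j (i + 1) ⊕ Idx j i))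

/-- Koszul differential of a sequence of operators. -/
def kd (T : ℕ → G →ₗ[R] G) : ∀ j i, (Idx j (i + 1) → G) →ₗ[R] (Idx j i → G)
  | 0, _ => 0
  | j + 1, 0 => (kd T j 0 ∘ₗ pl R G j 0 + (T j).compLeft (Idx j 0) ∘ₗ pr R G j 0 :
      (Idx (j + 1) 1 → G) →ₗ[R] (Idx j 0 → G))
  | j + 1, i + 1 =>
    ((LinearEquiv.sumArrowLequivProdArrow (Idx j (i + 1)) (Idx j i) R G).symm.toLinearMap ∘ₗ
      LinearMap.prod
        (kd T j (i + 1) ∘ₗ pl R G j (i + 1) + (T j).compLeft (Idx j (i + 1)) ∘ₗ pr R G j (i + 1))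
        (-(kd T j i ∘ₗ pr R G j (i + 1))) :
      (Idx (j + 1) (i + 2) → G) →ₗ[R] (Idx j (i + 1) ⊕ Idx j i → G))

/-- Gluing two cochains. -/
def glue {j i : ℕ} (a : Idx j (i + 1) → G) (b : Idx j i → G) : Idx (j + 1) (i + 1) → G :=
  Sum.elim a b

theorem glue_surj {j i : ℕ} (f : Idx (j + 1) (i + 1) → G) : ∃ a b, f = glue a b :=
  ⟨fun x => f (Sum.inl x), fun x => f (Sum.inr x), by
    funext x; rcases x with x | x <;> rfl⟩

theorem glue_inj {j i : ℕ} {a a' : Idx j (i + 1) → G} {b b' : Idx j i → G} :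
    glue a b = glue a' b' ↔ a = a' ∧ b = b' := by
  constructor
  · intro h
    exact ⟨funext fun x => congrFun h (Sum.inl x), funext fun x => congrFun h (Sum.inr x)⟩
  · rintro ⟨rfl, rfl⟩; rfl

theorem kd_zero_col (T : ℕ → G →ₗ[R] G) (j : ℕ) (a : Idx j 1 → G) (b : Idx j 0 → G) :
    kd T (j + 1) 0 (glue a b) = (kd T j 0 a + fun x => T j (b x) : Idx j 0 → G) := rfl

theorem kd_succ_col (T : ℕ → G →ₗ[R] G) (j i : ℕ) (a : Idx j (i + 2) → G)
    (b : Idx j (i + 1) → G) :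
    kd T (j + 1) (i + 1) (glue a b) =
      glue (kd T j (i + 1) a + fun x => T j (b x)) (-(kd T j i b)) := rfl

theorem glue_zero {j i : ℕ} : (glue 0 0 : Idx (j + 1) (i + 1) → G) = 0 := by
  funext x; rcases x with x | x <;> rfl

theorem kd_nat (T : ℕ → G →ₗ[R] G) (T' : ℕ → G' →ₗ[R] G') (φ : G →ₗ[R] G')
    (h : ∀ k g, φ (T k g) = T' k (φ g)) :
    ∀ j i (f : Idx j (i + 1) → G), (fun x => φ (kd T j i f x)) = kd T' j i (fun x => φ (f x))
  | 0, i, f => by funext x; simp [kd]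
  | j + 1, 0, f => by
    obtain ⟨a, b, rfl⟩ := glue_surj f
    have h1 := kd_nat T T' φ h j 0 a
    have h2 : (fun x => φ (glue a b x)) = glue (fun x => φ (a x)) (fun x => φ (b x)) := by
      funext x; rcases x with x | x <;> rfl
    rw [h2, kd_zero_col, kd_zero_col, ← h1]
    funext x
    change φ (_ + _) = _
    rw [map_add, h]
    rfl
  | j + 1, i + 1, f => by
    obtain ⟨a, b, rfl⟩ := glue_surj f
    have h1 := kd_nat T T' φ h j (i + 1) a
    have h3 := kd_nat T T' φ h j i b
    have h2 : ∀ {j i : ℕ} (a : Idx j (i + 1) → G) (b : Idx j i → G),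
       (fun x => φ (glue a b x)) = glue (fun x => φ (a x)) (fun x => φ (b x)) := by
      intro j i a b
      funext x; rcases x with x | x <;> rfl
    rw [h2, kd_succ_col, kd_succ_col, ← h1, ← h3, h2, glue_inj]
    constructor
    · funext x
      simp [h]
    · funext x
      simp

theorem kd_sq (T : ℕ → G →ₗ[R] G) (hc : ∀ k l g, T k (T l g) = T l (T k g)) :
    ∀ j i (f : Idx j (i + 2) → G), kd T j i (kd T j (i + 1) f) = 0
  | 0, i, f => by simp [kd]
  | j + 1, 0, f => by
    obtain ⟨a, b, rfl⟩ := glue_surj f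
    rw [kd_succ_col, kd_zero_col, map_add, kd_sq T hc j 0 a, ← kd_nat T T (T j) (hc j) j 0 b]
    funext x
    change 0 + _ + T j (- _) = 0
    rw [map_neg]
    simp
  | j + 1, i + 1, f => by
    obtain ⟨a, b, rfl⟩ := glue_surj f
    rw [kd_succ_col, kd_succ_col, map_add, kd_sq T hc j (i + 1) a,
      ← kd_nat T T (T j) (hc j) j (i + 1) b, map_neg, kd_sq T hc j i b, ← glue_zero, glue_inj]
    constructor
    · funext x
      simp
    · simp

theorem kd_range (T : ℕ → G →ₗ[R] G) (J : ℕ → Submodule R G) (J0 : J 0 = ⊥)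
    (Js : ∀ j, J (j + 1) = J j ⊔ LinearMap.range (T j)) :
    ∀ j (f : Idx j 0 → G), (∃ h, kd T j 0 h = f) ↔ f default ∈ J j
  | 0, f => by
    rw [J0, Submodule.mem_bot]
    constructor
    · rintro ⟨h, rfl⟩; simp [kd]
    · intro h
      refine ⟨0, ?_⟩
      funext x
      rw [Unique.eq_default x, h]; simp
  | j + 1, f => by
    rw [Js, Submodule.mem_sup]
    constructor
    · rintro ⟨h, rfl⟩
      obtain ⟨a, b, rfl⟩ := glue_surj h
      exact ⟨_, (kd_range T J J0 Js j _).1 ⟨a, rfl⟩, _, ⟨b default, rfl⟩, rfl⟩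
    · rintro ⟨y, hy, _, ⟨z, rfl⟩, hz⟩
      obtain ⟨a, ha⟩ := (kd_range T J J0 Js j (fun _ => y)).2 hy
      refine ⟨glue a (fun _ => z), ?_⟩
      rw [kd_zero_col, ha]
      funext x
      rw [Unique.eq_default x]
      exact hz

theorem kd_exact (T : ℕ → G →ₗ[R] G) (hc : ∀ k l g, T k (T l g) = T l (T k g))
    (J : ℕ → Submodule R G) (J0 : J 0 = ⊥)
    (Js : ∀ j, J (j + 1) = J j ⊔ LinearMap.range (T j)) (N : ℕ)
    (hreg : ∀ j < N, ∀ g, T j g ∈ J j → g ∈ J j) :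
    ∀ j (_ : j ≤ N) i (f : Idx j (i + 1) → G), kd T j i f = 0 → ∃ h, kd T j (i + 1) h = f
  | 0, _, i, f, _ => ⟨0, by funext x; exact x.elim⟩
  | j + 1, hj, i, f, hf => by
    obtain ⟨a, b, rfl⟩ := glue_surj f
    have key : (∃ b', kd T j i b' = b) ∧ kd T j i a + (fun x => T j (b x)) = 0 := by
      cases i with
      | zero =>
        rw [kd_zero_col] at hf
        refine ⟨?_, hf⟩
        rw [kd_range T J J0 Js]
        apply hreg j hj
        have : ∃ h, kd T j 0 h = (fun x => T j (b x)) :=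
          ⟨-a, by rw [map_neg]; exact neg_eq_of_add_eq_zero_right hf⟩
        exact (kd_range T J J0 Js j _).1 this
      | succ i =>
        rw [kd_succ_col, ← glue_zero, glue_inj] at hf
        exact ⟨kd_exact T hc J J0 Js N hreg j (by omega) i b (neg_eq_zero.1 hf.2), hf.1⟩
    obtain ⟨⟨b', hb'⟩, h2⟩ := key
    obtain ⟨a', ha'⟩ := kd_exact T hc J J0 Js N hreg j (by omega) i (a + fun x => T j (b' x)) (by
      rw [map_add, ← kd_nat T T (T j) (hc j) j i b', hb']; exact h2)
    refine ⟨glue a' (-b'), ?_⟩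
    rw [kd_succ_col, ha', map_neg, hb', glue_inj]
    constructor
    · funext x; simp
    · simp

/-- Kernel of the reduced Koszul differential. -/
theorem kd_ker (T : ℕ → G →ₗ[R] G) (p : G →ₗ[R] G') (c : ℕ → G →ₗ[R] G') (N : ℕ)
    (hp : ∀ j < N, ∀ g, p g = 0 → T j g = 0)
    (hc : ∀ j < N, ∀ k < N, j ≠ k → ∀ g, c j (T k g) = 0)
    (hcc : ∀ j < N, ∀ g, c j (T j g) = 0 → p g = 0) :
    ∀ j (_ : j ≤ N) i (f : Idx j (i + 1) → G), kd T j i f = 0 ↔ ∀ x, p (f x) = 0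
  | 0, _, i, f => by
    constructor
    · intro _ x; exact x.elim
    · intro _; simp [kd]
  | j + 1, hj, 0, f => by
    obtain ⟨a, b, rfl⟩ := glue_surj f
    have ih := kd_ker T p c N hp hc hcc j (by omega) 0 a
    have hz : ∀ (j' : ℕ) (_ : j' ≤ j) (a : Idx j' 1 → G) x, c j (kd T j' 0 a x) = 0 := by
      intro j'
      induction j' with
      | zero => intro _ a x; simp [kd]
      | succ j' ih =>
        intro h a (x : Idx j' 0)
        obtain ⟨a1, a2, rfl⟩ := glue_surj a
        rw [kd_zero_col]
        change c j (_ + _) = 0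
        rw [map_add, ih (by omega), hc j (by omega) j' (by omega) (by omega), add_zero]
    rw [kd_zero_col]
    constructor
    · intro h
      have hb : p (b default) = 0 := by
        apply hcc j (by omega)
        have := congrArg (c j) (congrFun h default)
        change c j (_ + _) = c j 0 at this
        rwa [map_add, hz j le_rfl, zero_add, map_zero] at this
      have hb' : (fun x => T j (b x)) = 0 := by
        funext x
        rw [Unique.eq_default x]
        exact hp j (by omega) _ hb
      have h' : kd T j 0 a = 0 := by
        rw [hb', add_zero] at h; exact h
      rintro (x | x)
      · exact ih.1 h' x
      · rw [show x = default from Unique.eq_default x]; exact hb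
    · intro h
      have h' : kd T j 0 a = 0 := ih.2 (fun x => h (Sum.inl x))
      rw [h']
      funext x
      rw [zero_add]
      exact hp j (by omega) _ (h (Sum.inr x))
  | j + 1, hj, i + 1, f => by
    obtain ⟨a, b, rfl⟩ := glue_surj f
    have ih1 := kd_ker T p c N hp hc hcc j (by omega) (i + 1) a
    have ih2 := kd_ker T p c N hp hc hcc j (by omega) i b
    rw [kd_succ_col, ← glue_zero, glue_inj, neg_eq_zero, ih2]
    constructor
    · rintro ⟨h1, h2⟩
      have : (fun x => T j (b x)) = 0 := by
        funext x; exact hp j (by omega) _ (h2 x)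
      rw [this, add_zero] at h1
      rintro (x | x)
      · exact ih1.1 h1 x
      · exact h2 x
    · intro h
      refine ⟨?_, fun x => h (Sum.inr x)⟩
      rw [ih1.2 (fun x => h (Sum.inl x))]
      funext x
      simp only [Pi.add_apply, Pi.zero_apply, zero_add]
      exact hp j (by omega) _ (h (Sum.inr x))

end Kos

end Helpers12

section Helpers3
set_option linter.style.haveILetI false
universe u
open CategoryTheory TensorProduct

theorem killed_equiv {R : Type u} [CommRing R] (m : Ideal R) [m.IsMaximal] (T : Type u)
    [AddCommGroup T] [Module R T] (hk : ∀ a ∈ m, ∀ x : T, a • x = 0) (b : ℕ)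
    (hb : Module.length R T = b) : Nonempty (T ≃ₗ[R] (Fin b → R ⧸ m)) := by
  have hM : Module.IsTorsionBySet R T m := fun x a => hk a.1 a.2 x
  letI := hM.module
  letI : Field (R ⧸ m) := Ideal.Quotient.field m
  haveI : IsScalarTower R (R ⧸ m) T := hM.isScalarTower
  have h1 : Module.length R T = Module.length (R ⧸ m) T :=
    Module.length_eq_of_surjective (Ideal.Quotient.mk_surjective)
  have hfl : IsFiniteLength (R ⧸ m) T := by
    rw [← Module.length_ne_top_iff, ← h1, hb]; simp
  haveI : Module.Finite (R ⧸ m) T := by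
    have := (isFiniteLength_iff_isNoetherian_isArtinian.1 hfl).1
    infer_instance
  have h2 : Module.finrank (R ⧸ m) T = b := by
    rw [Module.length_eq_finrank, hb] at h1
    exact_mod_cast h1.symm
  have e : T ≃ₗ[R ⧸ m] (Fin b → R ⧸ m) := LinearEquiv.ofFinrankEq _ _ (by simp [h2])
  exact ⟨e.restrictScalars R⟩

theorem length_sub_quot {R : Type u} [CommRing R] {X : Type u} [AddCommGroup X] [Module R X]
    (S : Submodule R X) : Module.length R X = Module.length R S + Module.length R (X ⧸ S) :=
  Module.length_eq_add_of_exact S.subtype S.mkQ (Submodule.subtype_injective _)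
    (Submodule.mkQ_surjective _) (LinearMap.exact_subtype_mkQ _)

theorem homology_equiv {R : Type u} [CommRing R] (m : Ideal R) [m.IsMaximal]
    {X Y W : Type u} [AddCommGroup X] [Module R X] [AddCommGroup Y] [Module R Y]
    [AddCommGroup W] [Module R W] (f : X →ₗ[R] Y) (g : W →ₗ[R] X)
    (hkill : ∀ a ∈ m, ∀ z : X, a • z = 0) (hfg : ∀ w, f (g w) = 0) (x y w b : ℕ)
    (hx : Module.length R X = x) (hy : Module.length R (LinearMap.range f) = y)
    (hw : Module.length R (LinearMap.range g) = w) (hb : x = w + b + y) :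
    Nonempty ((LinearMap.ker f ⧸ (LinearMap.range g).submoduleOf (LinearMap.ker f)) ≃ₗ[R]
      (Fin b → R ⧸ m)) := by
  refine killed_equiv m _ ?_ b ?_
  · intro a ha x
    obtain ⟨z, rfl⟩ := Submodule.mkQ_surjective _ x
    rw [← map_smul]
    have : a • z = 0 := Subtype.ext (hkill a ha z.1)
    rw [this, map_zero]
  · have h1 := length_sub_quot ((LinearMap.range g).submoduleOf (LinearMap.ker f))
    have hle : LinearMap.range g ≤ LinearMap.ker f := by
      rintro _ ⟨z, rfl⟩
      exact hfg z
    have h3 := length_sub_quot (LinearMap.ker f)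
    rw [(Submodule.submoduleOfEquivOfLe hle).length_eq, hw] at h1
    rw [hx, h1, f.quotKerEquivRange.length_eq, hy] at h3
    generalize Module.length R (LinearMap.ker f ⧸
        (LinearMap.range g).submoduleOf (LinearMap.ker f)) = l at *
    induction l with
    | top => simp at h3
    | coe l =>
      norm_cast at h3 ⊢
      omega

section Betti
variable {R : Type u} [CommRing R] (m : Ideal R) {G : Type u} [AddCommGroup G]
  [Module R G] {N : ℕ} (b : Module.Basis (Option (Fin N)) R G)

theorem tmul_zero_of_mem {g : G} (hg : g ∈ m • (⊤ : Submodule R G)) :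
    (1 : R ⧸ m) ⊗ₜ[R] g = 0 := by
  refine Submodule.smul_induction_on hg ?_ ?_
  · intro r hr n _
    rw [← TensorProduct.smul_tmul, Algebra.smul_def, mul_one]
    have : algebraMap R (R ⧸ m) r = 0 := Ideal.Quotient.eq_zero_iff_mem.2 hr
    rw [this, TensorProduct.zero_tmul]
  · intro x y hx hy
    rw [TensorProduct.tmul_add, hx, hy, add_zero]

theorem exists_tmul (z : (R ⧸ m) ⊗[R] G) : ∃ g : G, z = 1 ⊗ₜ g := by
  induction z with
  | zero => exact ⟨0, by simp⟩
  | tmul q g =>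
    obtain ⟨r, rfl⟩ := Ideal.Quotient.mk_surjective q
    refine ⟨r • g, ?_⟩
    rw [← TensorProduct.smul_tmul, Algebra.smul_def, mul_one]
    rfl
  | add x y hx hy =>
    obtain ⟨g, rfl⟩ := hx
    obtain ⟨h, rfl⟩ := hy
    exact ⟨g + h, by rw [TensorProduct.tmul_add]⟩

theorem apply_mem_of_mem (f : G →ₗ[R] R) {g : G} (hg : g ∈ m • (⊤ : Submodule R G)) : f g ∈ m := by
  refine Submodule.smul_induction_on hg ?_ ?_
  · intro r hr n _
    rw [map_smul]
    exact m.mul_mem_right _ hr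
  · intro x y hx hy
    rw [map_add]
    exact m.add_mem hx hy

/-- reduced functional -/
def redF (f : G →ₗ[R] R) : (R ⧸ m) ⊗[R] G →ₗ[R] (R ⧸ m) :=
  (TensorProduct.rid R (R ⧸ m)).toLinearMap ∘ₗ LinearMap.lTensor (R ⧸ m) f

theorem redF_tmul (f : G →ₗ[R] R) (g : G) :
    redF m f ((1 : R ⧸ m) ⊗ₜ g) = Ideal.Quotient.mk m (f g) := by
  simp only [redF, LinearMap.comp_apply, LinearMap.lTensor_tmul, LinearEquiv.coe_coe,
    TensorProduct.rid_tmul, Algebra.smul_def, mul_one]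
  rfl

theorem T_red (T : ℕ → G →ₗ[R] G)
    (hT1 : ∀ k l : Fin N, T k (b (some l)) ∈ m • (⊤ : Submodule R G))
    (hT0 : ∀ k : Fin N, T k (b none) + b (some k) ∈ m • (⊤ : Submodule R G))
    (k : Fin N) (g : G) :
    T k g + b.coord none g • b (some k) ∈ m • (⊤ : Submodule R G) := by
  have h := b.sum_repr g
  rw [Fintype.sum_option] at h
  have h2 : T k g + b.coord none g • b (some k) =
      b.repr g none • (T k (b none) + b (some k)) + ∑ l : Fin N, b.repr g (some l) •
        T k (b (some l)) := by
    have h' := congrArg (T k) h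
    rw [← h', map_add, map_smul, map_sum, smul_add, Module.Basis.coord_apply]
    simp only [map_smul]
    abel
  rw [h2]
  refine Submodule.add_mem _ (Submodule.smul_mem _ _ (hT0 k)) (Submodule.sum_mem _ ?_)
  intro l _
  exact Submodule.smul_mem _ _ (hT1 k l)

/-- tensor with functions -/
def tpi (Q : Type u) [AddCommGroup Q] [Module R Q] (j i : ℕ) :
    Q ⊗[R] (Idx j i → G) ≃ₗ[R] (Idx j i → Q ⊗[R] G) :=
  TensorProduct.piRight R R Q (fun _ => G)

theorem tpi_kd (Q : Type u) [AddCommGroup Q] [Module R Q] (T : ℕ → G →ₗ[R] G) (j i : ℕ)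
    (z : Q ⊗[R] (Idx j (i+1) → G)) :
    tpi Q j i (LinearMap.lTensor Q (kd T j i) z) =
      kd (fun k => LinearMap.lTensor Q (T k)) j i (tpi Q j (i+1) z) := by
  induction z with
  | zero => simp
  | tmul q f =>
    have h := kd_nat T (fun k => LinearMap.lTensor Q (T k)) (TensorProduct.mk R Q G q)
      (fun k g => by simp) j i f
    have h1 : ∀ i (f : Idx j i → G), tpi Q j i (q ⊗ₜ f) = fun x => TensorProduct.mk R Q G q (f x) := by
      intro i f
      funext x
      simp [tpi]
    rw [LinearMap.lTensor_tmul, h1, h1, h]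
  | add x y hx hy => simp only [map_add, hx, hy]

variable [m.IsMaximal]

theorem betti_main {M : Type u} [AddCommGroup M] [Module R M] (T : ℕ → G →ₗ[R] G)
    (hc : ∀ k l g, T k (T l g) = T l (T k g))
    (J : ℕ → Submodule R G) (J0 : J 0 = ⊥)
    (Js : ∀ j, J (j + 1) = J j ⊔ LinearMap.range (T j))
    (hreg : ∀ j < N, ∀ g, T j g ∈ J j → g ∈ J j)
    (hT1 : ∀ k l : Fin N, T k (b (some l)) ∈ m • (⊤ : Submodule R G))
    (hT0 : ∀ k : Fin N, T k (b none) + b (some k) ∈ m • (⊤ : Submodule R G))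
    (ε : G →ₗ[R] M) (hε : LinearMap.ker ε = J N) (hs : Function.Surjective ε) (i : ℕ) :
    Nonempty ((((Tor (ModuleCat.{u} R) i).obj (ModuleCat.of R (R ⧸ m))).obj (ModuleCat.of R M) :
      ModuleCat.{u} R) ≃ₗ[R] (Fin (if i = 0 then 1 else i * Nat.choose (N + 1) (i + 1)) →
        R ⧸ m)) := by
  let Q := R ⧸ m
  haveI : IsSimpleModule R (R ⧸ m) := isSimpleModule_iff_isCoatom.2 (Ideal.isMaximal_def.1 ‹_›)
  haveI : Module.Free R G := Module.Free.of_basis b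
  let ε' : (Idx N 0 → G) →ₗ[R] M := ε ∘ₗ LinearMap.proj default
  have h2 : ∀ i, kd T N i ∘ₗ kd T N (i+1) = 0 := fun i => LinearMap.ext fun f => kd_sq T hc N i f
  have hex : ∀ i, Function.Exact (kd T N (i+1)) (kd T N i) := fun i f => by
    constructor
    · exact kd_exact T hc J J0 Js N hreg N le_rfl i f
    · rintro ⟨h, rfl⟩; exact kd_sq T hc N i h
  have hε' : Function.Exact (kd T N 0) ε' := fun f => by
    change ε (f default) = 0 ↔ _
    rw [← LinearMap.mem_ker, hε, ← kd_range T J J0 Js]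
    rfl
  have hs' : Function.Surjective ε' := fun x => by
    obtain ⟨g, rfl⟩ := hs x
    exact ⟨fun _ => g, rfl⟩
  -- reduced differentials
  let δ := fun i => LinearMap.lTensor Q (kd T N i)
  have hred := T_red m b T hT1 hT0
  have hker : ∀ i (f : Idx N (i+1) → Q ⊗[R] G),
      kd (fun k => LinearMap.lTensor Q (T k)) N i f = 0 ↔
        ∀ x, redF m (b.coord none) (f x) = 0 := by
    refine kd_ker _ (redF m (b.coord none))
      (fun j => if h : j < N then redF m (b.coord (some ⟨j, h⟩)) else 0) N ?_ ?_ ?_ N le_rfl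
    · intro j hj g hg
      obtain ⟨g, rfl⟩ := exists_tmul m g
      rw [redF_tmul, Ideal.Quotient.eq_zero_iff_mem] at hg
      rw [LinearMap.lTensor_tmul]
      apply tmul_zero_of_mem
      have := hred ⟨j, hj⟩ g
      rwa [Submodule.add_mem_iff_left] at this
      exact Submodule.smul_mem_smul hg trivial
    · intro j hj k hk hjk g
      obtain ⟨g, rfl⟩ := exists_tmul m g
      rw [dif_pos hj, LinearMap.lTensor_tmul, redF_tmul, Ideal.Quotient.eq_zero_iff_mem]
      have := apply_mem_of_mem m (b.coord (some ⟨j, hj⟩)) (hred ⟨k, hk⟩ g)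
      rw [map_add, map_smul] at this
      have h0 : b.coord (some ⟨j, hj⟩) (b (some ⟨k, hk⟩)) = 0 := by
        simp [Ne.symm hjk]
      rwa [h0, smul_zero, add_zero] at this
    · intro j hj g
      obtain ⟨g, rfl⟩ := exists_tmul m g
      rw [dif_pos hj, LinearMap.lTensor_tmul, redF_tmul, Ideal.Quotient.eq_zero_iff_mem,
        redF_tmul, Ideal.Quotient.eq_zero_iff_mem]
      intro hg
      have := apply_mem_of_mem m (b.coord (some ⟨j, hj⟩)) (hred ⟨j, hj⟩ g)
      rw [map_add, map_smul] at this
      have h0 : b.coord (some ⟨j, hj⟩) (b (some ⟨j, hj⟩)) = 1 := by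
        simp
      rw [h0, smul_eq_mul, mul_one] at this
      exact (Submodule.add_mem_iff_right _ hg).1 this
  let π : ∀ i, Q ⊗[R] (Idx N i → G) →ₗ[R] (Idx N i → Q) := fun i =>
    (redF m (b.coord none)).compLeft (Idx N i) ∘ₗ (tpi Q N i).toLinearMap
  have hkerπ : ∀ i, LinearMap.ker (δ i) = LinearMap.ker (π (i+1)) := by
    intro i
    ext z
    rw [LinearMap.mem_ker, LinearMap.mem_ker, ← (tpi Q N i).map_eq_zero_iff]
    change tpi Q N i (LinearMap.lTensor Q (kd T N i) z) = 0 ↔ _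
    rw [tpi_kd, hker]
    exact funext_iff.symm
  have hπs : ∀ i, Function.Surjective (π i) := by
    intro i f
    have h1 : Function.Surjective (redF m (b.coord none)) := by
      intro q
      obtain ⟨r, rfl⟩ := Ideal.Quotient.mk_surjective q
      exact ⟨1 ⊗ₜ (r • b none), by rw [redF_tmul]; simp⟩
    choose g hg using fun x => h1 (f x)
    refine ⟨(tpi Q N i).symm g, ?_⟩
    funext x
    simp [π, hg]
  have hlQ : Module.length R Q = 1 := Module.length_eq_one R Q
  have hlX : ∀ i, Module.length R (Q ⊗[R] (Idx N i → G)) = ((N + 1) * Nat.choose N i : ℕ) := by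
    intro i
    have e : Q ⊗[R] G ≃ₗ[R] (Option (Fin N) → Q) :=
      LinearEquiv.lTensor Q b.equivFun ≪≫ₗ TensorProduct.piScalarRight R R Q _
    rw [(tpi Q N i).length_eq, Module.length_pi, e.length_eq, Module.length_pi, hlQ,
      ENat.card_eq_coe_fintype_card, ENat.card_eq_coe_fintype_card, Idx.card]
    simp [mul_comm]
  have hlπ : ∀ i, Module.length R (Idx N i → Q) = (Nat.choose N i : ℕ) := by
    intro i
    rw [Module.length_pi, hlQ, ENat.card_eq_coe_fintype_card, Idx.card, mul_one]
  have hlr : ∀ i, Module.length R (LinearMap.range (δ i)) = (Nat.choose N (i + 1) : ℕ) := by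
    intro i
    rw [← (δ i).quotKerEquivRange.length_eq,
      (Submodule.quotEquivOfEq _ _ (hkerπ i)).length_eq,
      ((π (i+1)).quotKerEquivOfSurjective (hπs (i+1))).length_eq, hlπ]
  have hkill : ∀ i, ∀ a ∈ m, ∀ z : Q ⊗[R] (Idx N i → G), a • z = 0 := by
    intro i a ha z
    obtain ⟨g, rfl⟩ := exists_tmul m z
    rw [← TensorProduct.tmul_smul]
    exact tmul_zero_of_mem m (Submodule.smul_mem_smul ha trivial)
  cases i with
  | zero =>
    obtain ⟨e⟩ := tor_zero Q (fun i => Idx N i → G) (kd T N) ε' h2 hex hε' hs'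
    obtain ⟨e'⟩ := killed_equiv m (Q ⊗[R] (Idx N 0 → G) ⧸ LinearMap.range (δ 0)) (by
      intro a ha x
      obtain ⟨z, rfl⟩ := Submodule.mkQ_surjective _ x
      rw [← map_smul, hkill 0 a ha, map_zero]) 1 (by
      have := length_sub_quot (LinearMap.range (δ 0))
      rw [hlX, hlr] at this
      generalize Module.length R (Q ⊗[R] (Idx N 0 → G) ⧸ LinearMap.range (δ 0)) = l at *
      induction l with
      | top => simp at this
      | coe l =>
        norm_cast at this ⊢
        simp at this
        omega)
    exact ⟨e ≪≫ₗ e'⟩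
  | succ i =>
    obtain ⟨e⟩ := tor_succ Q (fun i => Idx N i → G) (kd T N) ε' h2 hex hε' hs' i
    obtain ⟨e'⟩ := homology_equiv m (LinearMap.lTensor Q (kd T N i))
      (LinearMap.lTensor Q (kd T N (i+1))) (hkill (i+1)) (by
        intro z
        rw [← LinearMap.comp_apply, ← LinearMap.lTensor_comp, h2, LinearMap.lTensor_zero]
        rfl) _ _ _ ((i + 1) * Nat.choose (N + 1) (i + 1 + 1)) (hlX (i+1)) (hlr i) (hlr (i+1)) (by
        have := Nat.add_one_mul_choose_eq N (i+1)
        have h5 := Nat.choose_succ_succ' N (i+1)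
        nlinarith)
    rw [if_neg (by omega)]
    exact ⟨e ≪≫ₗ e'⟩
end Betti

end Helpers3

section Helpers4
set_option linter.style.haveILetI false
universe u
open CategoryTheory MvPolynomial

theorem X_regular {σ A : Type*} [CommRing A] (s : Set σ) (j : σ) (hj : j ∉ s)
    (g : MvPolynomial σ A) (h : X j * g ∈ Ideal.span ((X : σ → MvPolynomial σ A) '' s)) :
    g ∈ Ideal.span ((X : σ → MvPolynomial σ A) '' s) := by
  classical
  rw [mem_ideal_span_X_image] at h ⊢
  intro mm hm
  obtain ⟨i, his, hi⟩ := h (Finsupp.single j 1 + mm) (by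
    rw [mem_support_iff, coeff_X_mul]
    exact mem_support_iff.1 hm)
  refine ⟨i, his, ?_⟩
  have : j ≠ i := by rintro rfl; exact hj his
  simpa [Finsupp.single_apply, this] using hi

theorem shift_regular {σ A : Type*} [CommRing A] (a : σ → A) (s : Set σ) (j : σ) (hj : j ∉ s)
    (g : MvPolynomial σ A)
    (h : (X j - C (a j)) * g ∈ Ideal.span ((fun k => (X k - C (a k) : MvPolynomial σ A)) '' s)) :
    g ∈ Ideal.span ((fun k => (X k - C (a k) : MvPolynomial σ A)) '' s) := by
  let f1 : MvPolynomial σ A →ₐ[A] MvPolynomial σ A := aeval fun k => X k + C (a k)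
  let f2 : MvPolynomial σ A →ₐ[A] MvPolynomial σ A := aeval fun k => X k - C (a k)
  have h21 : ∀ x, f2 (f1 x) = x := fun x => by
    have : f2.comp f1 = AlgHom.id A _ := by
      apply MvPolynomial.algHom_ext
      intro k
      simp [f1, f2, MvPolynomial.algebraMap_eq]
    exact DFunLike.congr_fun this x
  have hi1 : (Ideal.span ((fun k => (X k - C (a k) : MvPolynomial σ A)) '' s)).map f1.toRingHom ≤
      Ideal.span (X '' s) := by
    rw [Ideal.map_span, Ideal.span_le]
    rintro _ ⟨_, ⟨k, hk, rfl⟩, rfl⟩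
    refine Ideal.subset_span ⟨k, hk, ?_⟩
    simp [f1, MvPolynomial.algebraMap_eq]
  have hi2 : (Ideal.span ((X : σ → MvPolynomial σ A) '' s)).map f2.toRingHom ≤
      (Ideal.span ((fun k => (X k - C (a k) : MvPolynomial σ A)) '' s)) := by
    rw [Ideal.map_span, Ideal.span_le]
    rintro _ ⟨_, ⟨k, hk, rfl⟩, rfl⟩
    refine Ideal.subset_span ⟨k, hk, ?_⟩
    simp [f2]
  have h1 := hi1 (Ideal.mem_map_of_mem f1.toRingHom h)
  have h2 : f1.toRingHom ((X j - C (a j)) * g) = X j * f1 g := by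
    simp [f1, MvPolynomial.algebraMap_eq]
  rw [h2] at h1
  have h3 := hi2 (Ideal.mem_map_of_mem f2.toRingHom (X_regular s j hj _ h1))
  change f2 (f1 g) ∈ _ at h3
  rwa [h21] at h3

theorem ker_eval_eq {σ A : Type*} [CommRing A] (a : σ → A) (g : MvPolynomial σ A) :
    eval a g = 0 ↔ g ∈ Ideal.span (Set.range fun k => (X k - C (a k) : MvPolynomial σ A)) := by
  have key : ∀ g : MvPolynomial σ A, g - C (eval a g) ∈
      Ideal.span (Set.range fun k => (X k - C (a k) : MvPolynomial σ A)) := by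
    intro g
    induction g using MvPolynomial.induction_on with
    | C r => simp
    | add p q hp hq =>
      have := Ideal.add_mem _ hp hq
      rw [map_add, C_add]
      convert this using 1
      ring
    | mul_X p k hp =>
      have h1 := Ideal.mul_mem_right (X k) _ hp
      have h2 := Ideal.mul_mem_left _ (C (eval a p)) (Ideal.subset_span
        (Set.mem_range_self (f := fun k => (X k - C (a k) : MvPolynomial σ A)) k))
      have := Ideal.add_mem _ h1 h2
      rw [map_mul, eval_X, C_mul]
      convert this using 1
      ring
  constructor
  · intro h
    have := key g
    rwa [h, C_0, sub_zero] at this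
  · intro h
    have h2 : Ideal.span (Set.range fun k => (X k - C (a k) : MvPolynomial σ A)) ≤
        RingHom.ker (eval a) := by
      rw [Ideal.span_le]
      rintro _ ⟨k, rfl⟩
      simp [RingHom.mem_ker]
    exact h2 h

theorem alg_main {R G M : Type u} [CommRing R] [CommRing G] [Algebra R G] [AddCommGroup M]
    [Module R M] {N : ℕ} (m : Ideal R) [m.IsMaximal] (b : Module.Basis (Option (Fin N)) R G)
    (hb0 : b none = 1) (y : Fin N → R) (hy : ∀ k, y k ∈ m)
    (hmul : ∀ k l : Fin N, b (some k) * b (some l) ∈ m • (⊤ : Submodule R G))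
    (hreg : ∀ j : Fin N, ∀ g, (algebraMap R G (y j) - b (some j)) * g ∈
      Ideal.span ((fun k => algebraMap R G (y k) - b (some k)) '' {k | k < j}) → g ∈
      Ideal.span ((fun k => algebraMap R G (y k) - b (some k)) '' {k | k < j}))
    (ε : G →ₗ[R] M) (hs : Function.Surjective ε)
    (hε : ∀ g, ε g = 0 ↔ g ∈ Ideal.span (Set.range fun k => algebraMap R G (y k) - b (some k)))
    (i : ℕ) :
    Nonempty ((((Tor (ModuleCat.{u} R) i).obj (ModuleCat.of R (R ⧸ m))).obj (ModuleCat.of R M) :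
      ModuleCat.{u} R) ≃ₗ[R] (Fin (if i = 0 then 1 else i * Nat.choose (N + 1) (i + 1)) →
        R ⧸ m)) := by
  let t : Fin N → G := fun k => algebraMap R G (y k) - b (some k)
  let t' : ℕ → G := fun k => if h : k < N then t ⟨k, h⟩ else 0
  let T : ℕ → G →ₗ[R] G := fun k => LinearMap.mulLeft R (t' k)
  let J : ℕ → Submodule R G := fun j =>
    (Ideal.span (t' '' {k | k < j})).restrictScalars R
  have hT : ∀ k : Fin N, t' k = t k := fun k => by simp [t']
  have hJ : ∀ j : Fin N, J j = (Ideal.span (t '' {k | k < j})).restrictScalars R := by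
    intro j
    simp only [J]
    congr 2
    ext x
    constructor
    · rintro ⟨k, hk, rfl⟩
      have : k < j.1 := hk
      exact ⟨⟨k, by omega⟩, hk, (hT ⟨k, by omega⟩).symm⟩
    · rintro ⟨k, hk, rfl⟩
      exact ⟨k, hk, hT k⟩
  refine betti_main m b T ?_ J ?_ ?_ ?_ ?_ ?_ ε ?_ hs i
  · intro k l g
    simp [T, mul_left_comm]
  · simp [J]
  · intro j
    ext g
    have : {k | k < j + 1} = insert j {k | k < j} := by
      ext k
      simp only [Set.mem_ofPred_eq, Set.mem_insert_iff]
      omega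
    simp only [J]
    rw [this, Set.image_insert_eq, Submodule.restrictScalars_mem, Ideal.mem_span_insert,
      Submodule.mem_sup]
    constructor
    · rintro ⟨a, z, hz, rfl⟩
      exact ⟨z, hz, _, ⟨a, rfl⟩, by simp [T]; ring⟩
    · rintro ⟨z, hz, _, ⟨a, rfl⟩, rfl⟩
      exact ⟨a, z, hz, by simp [T]; ring⟩
  · intro j hj g
    have := hreg ⟨j, hj⟩ g
    have h1 := hJ ⟨j, hj⟩
    simp only at h1
    rw [h1]
    simp only [T, LinearMap.mulLeft_apply, Submodule.restrictScalars_mem]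
    rw [hT ⟨j, hj⟩]
    exact this
  · intro k l
    simp only [T, LinearMap.mulLeft_apply]
    rw [hT, sub_mul, ← Algebra.smul_def]
    exact Submodule.sub_mem _ (Submodule.smul_mem_smul (hy k) trivial) (hmul k l)
  · intro k
    simp only [T, LinearMap.mulLeft_apply]
    rw [hT, hb0, mul_one, sub_add_cancel, Algebra.algebraMap_eq_smul_one]
    exact Submodule.smul_mem_smul (hy k) trivial
  · ext g
    rw [LinearMap.mem_ker, hε]
    simp only [J, Submodule.restrictScalars_mem]
    have : Set.range (fun k => algebraMap R G (y k) - b (some k)) = t' '' {k | k < N} := by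
      ext x
      constructor
      · rintro ⟨k, rfl⟩
        exact ⟨k, k.2, hT k⟩
      · rintro ⟨k, hk, rfl⟩
        exact ⟨⟨k, hk⟩, (hT ⟨k, hk⟩).symm⟩
    rw [this]

section
attribute [local instance] MvPolynomial.algebraMvPolynomial

theorem exists_basis_mv {A B ι σ : Type*} [CommRing A] [CommRing B] [Algebra B A]
    (c : Module.Basis ι B A) :
    ∃ b : Module.Basis ι (MvPolynomial σ B) (MvPolynomial σ A), ∀ i, b i = C (c i) := by
  have h := (inferInstance : Algebra.IsPushout B (MvPolynomial σ B) A (MvPolynomial σ A)).out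
  refine ⟨h.basis c, fun i => ?_⟩
  rw [IsBaseChange.basis_apply]
  rfl

end

theorem poly_main {R A B M : Type u} [CommRing R] [CommRing A] [CommRing B] [Algebra B A]
    [AddCommGroup M] [Module R M] {N : ℕ} (m : Ideal R) [m.IsMaximal]
    (e : R ≃+* MvPolynomial (Fin N) B) (c : Module.Basis (Option (Fin N)) B A)
    (hc0 : c none = 1) (hy : ∀ k, e.symm (X k) ∈ m)
    (hmul : ∀ k l : Fin N, ∃ z : B, ∃ a : A, e.symm (C z) ∈ m ∧
      c (some k) * c (some l) = algebraMap B A z * a)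
    (ε : A ≃+ M) (hε : ∀ r a, ε (eval (fun k => c (some k)) (map (algebraMap B A) (e r)) * a)
      = r • ε a) (i : ℕ) :
    Nonempty ((((Tor (ModuleCat.{u} R) i).obj (ModuleCat.of R (R ⧸ m))).obj (ModuleCat.of R M) :
      ModuleCat.{u} R) ≃ₗ[R] (Fin (if i = 0 then 1 else i * Nat.choose (N + 1) (i + 1)) →
        R ⧸ m)) := by
  obtain ⟨b0, hb0⟩ := exists_basis_mv (σ := Fin N) c
  let ψ : R →+* MvPolynomial (Fin N) A := (map (algebraMap B A)).comp e.toRingHom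
  letI : Algebra R (MvPolynomial (Fin N) A) := ψ.toAlgebra
  have hal : ∀ r, algebraMap R (MvPolynomial (Fin N) A) r = map (algebraMap B A) (e r) :=
    fun r => rfl
  letI := MvPolynomial.algebraMvPolynomial (σ := Fin N) (R := B) (S := A)
  let b : Module.Basis (Option (Fin N)) R (MvPolynomial (Fin N) A) :=
    b0.mapCoeffs e.symm (by
      intro p x
      rw [Algebra.smul_def, Algebra.smul_def, hal, RingEquiv.apply_symm_apply]
      rfl)
  have hb : ∀ i, b i = C (c i) := fun i => by simp [b, hb0]
  have ht : ∀ k, algebraMap R (MvPolynomial (Fin N) A) (e.symm (X k)) - b (some k) =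
      X k - C (c (some k)) := fun k => by
    rw [hal, hb, RingEquiv.apply_symm_apply, map_X]
  let ε' : MvPolynomial (Fin N) A →ₗ[R] M :=
    { toFun := fun g => ε (eval (fun k => c (some k)) g)
      map_add' := fun x y => by simp
      map_smul' := fun r x => by
        rw [Algebra.smul_def, hal, map_mul, hε]
        rfl }
  refine alg_main m b (by rw [hb, hc0, C_1]) (fun k => e.symm (X k)) hy ?_ ?_ ε' ?_ ?_ i
  · intro k l
    obtain ⟨z, a, hz, h⟩ := hmul k l
    rw [hb, hb, ← C_mul, h]
    have : (C (algebraMap B A z * a) : MvPolynomial (Fin N) A) = (e.symm (C z)) • (C a) := by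
      rw [Algebra.smul_def, hal, RingEquiv.apply_symm_apply, map_C, C_mul]
    rw [this]
    exact Submodule.smul_mem_smul hz trivial
  · intro j g
    simp only [ht]
    exact shift_regular (fun k => c (some k)) {k | k < j} j (by simp) g
  · intro x
    obtain ⟨a, rfl⟩ := ε.surjective x
    exact ⟨C a, by simp [ε']⟩
  · intro g
    simp only [ht]
    rw [← ker_eval_eq]
    simp [ε']

end Helpers4

section Helpers5
set_option linter.style.haveILetI false
universe u
open CategoryTheory MvPolynomial

theorem span_X_maximal {K : Type*} [Field K] {ι : Type*} :
    (Ideal.span (Set.range X) : Ideal (MvPolynomial ι K)).IsMaximal := by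
  have : (Ideal.span (Set.range X) : Ideal (MvPolynomial ι K)) =
      RingHom.ker (eval (fun _ : ι => (0 : K))) := by
    ext g
    rw [RingHom.mem_ker, ker_eval_eq]
    simp
  rw [this]
  exact RingHom.ker_isMaximal_of_surjective _ fun r => ⟨C r, by simp⟩

theorem mv_main' {K : Type u} [Field K] {ι σ : Type} {N : ℕ} (w : ι ≃ Fin N ⊕ σ)
    {A M : Type u} [CommRing A] [AddCommGroup M] [Module (MvPolynomial ι K) M]
    (q : MvPolynomial ι K →+* A) (hq : Function.Surjective q) (ε : A ≃+ M)
    (hε : ∀ r a, ε (q r * a) = r • ε a)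
    (hrel : ∀ s t : Fin N, ∃ z : σ, ∃ v : ι,
      q (X (w.symm (Sum.inl s)) * X (w.symm (Sum.inl t))) = q (X (w.symm (Sum.inr z)) * X v))
    {D Γ : Type*} [CommRing D] [IsDomain D] [Algebra K D] [AddCommMonoid Γ]
    (β : MvPolynomial σ K →ₐ[K] D) (hβ : Function.Injective β)
    (τ : MvPolynomial ι K →ₐ[K] AddMonoidAlgebra D Γ) (τ' : A →+* AddMonoidAlgebra D Γ)
    (hτ' : ∀ p, τ' (q p) = τ p)
    (hτz : ∀ z, τ (X (w.symm (Sum.inr z))) = AddMonoidAlgebra.single 0 (β (X z)))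
    (γ : Option (Fin N) → Γ) (hγ : Function.Injective γ) (hγ0 : γ none = 0)
    (d : Fin N → D) (hd : ∀ s, d s ≠ 0)
    (hτs : ∀ s, τ (X (w.symm (Sum.inl s))) = AddMonoidAlgebra.single (γ (some s)) (d s)) (i : ℕ) :
    Nonempty ((((Tor (ModuleCat.{u} (MvPolynomial ι K)) i).obj (ModuleCat.of _
      (MvPolynomial ι K ⧸ (Ideal.span (Set.range X) : Ideal (MvPolynomial ι K))))).obj
        (ModuleCat.of _ M) : ModuleCat.{u} (MvPolynomial ι K))
      ≃ₗ[MvPolynomial ι K] (Fin (if i = 0 then 1 else i * Nat.choose (N + 1) (i + 1)) →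
        MvPolynomial ι K ⧸ (Ideal.span (Set.range X) : Ideal (MvPolynomial ι K)))) := by
  haveI := span_X_maximal (K := K) (ι := ι)
  let κ : MvPolynomial σ K →+* A := q.comp
    (rename (w.symm ∘ Sum.inr) : MvPolynomial σ K →ₐ[K] MvPolynomial ι K).toRingHom
  letI : Algebra (MvPolynomial σ K) A := κ.toAlgebra
  have hκ : ∀ b, algebraMap (MvPolynomial σ K) A b =
    q (rename (w.symm ∘ Sum.inr) b) := fun b => rfl
  let c0 : Option (Fin N) → A := fun o => o.elim 1
    (fun s => q (X (w.symm (Sum.inl s))))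
  have hτB : ∀ b, τ' (algebraMap (MvPolynomial σ K) A b) = AddMonoidAlgebra.single 0 (β b) := by
    intro b
    rw [hκ, hτ']
    have : τ.comp (rename (w.symm ∘ Sum.inr)) =
        (AddMonoidAlgebra.singleZeroAlgHom (R := K)).comp β := by
      apply MvPolynomial.algHom_ext
      intro z
      simp [hτz]
    exact DFunLike.congr_fun this b
  let d' : Option (Fin N) → D := fun o => o.elim 1 d
  have hd' : ∀ o, d' o ≠ 0 := by
    rintro (_ | s)
    · exact one_ne_zero
    · exact hd s
  have hτc : ∀ o, τ' (c0 o) = AddMonoidAlgebra.single (γ o) (d' o) := by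
    rintro (_ | s)
    · rw [hγ0]
      exact map_one τ'
    · exact (hτ' _).trans (hτs s)
  have hli : LinearIndependent (MvPolynomial σ K) c0 := by
    rw [Fintype.linearIndependent_iff]
    intro g hg o
    have h1 := congrArg τ' hg
    simp only [map_sum, Algebra.smul_def, map_mul, hτB, hτc, AddMonoidAlgebra.single_mul_single,
      zero_add, map_zero] at h1
    have h2 := congrArg (fun f => AddMonoidAlgebra.coeff f (γ o)) h1
    have h3 : β (g o) * d' o = 0 := by
      classical
      simp only [AddMonoidAlgebra.coeff_sum, AddMonoidAlgebra.coeff_single, Finsupp.coe_finsetSum,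
        Finset.sum_apply, Finsupp.single_apply, hγ.eq_iff, Finset.sum_ite_eq', Finset.mem_univ,
        if_true, AddMonoidAlgebra.coeff_zero, Finsupp.coe_zero, Pi.zero_apply] at h2
      exact h2
    have h4 := (mul_eq_zero.1 h3).resolve_right (hd' o)
    exact hβ (by rw [h4, map_zero])
  let S : Submodule (MvPolynomial σ K) A := Submodule.span _ (Set.range c0)
  have hcS : ∀ o, c0 o ∈ S := fun o => Submodule.subset_span ⟨o, rfl⟩
  have hXz : ∀ z a, a ∈ S → q (X (w.symm (Sum.inr z))) * a ∈ S := by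
    intro z a ha
    have := S.smul_mem (X z) ha
    rw [Algebra.smul_def, hκ, rename_X] at this
    exact this
  have hX : ∀ j, q (X j) ∈ S := by
    intro j
    obtain ⟨x, rfl⟩ := w.symm.surjective j
    rcases x with s | z
    · exact hcS (some s)
    · have := hXz z 1 (hcS none)
      rwa [mul_one] at this
  have hXs : ∀ s a, a ∈ S → q (X (w.symm (Sum.inl s))) * a ∈ S := by
    intro s a ha
    refine Submodule.span_induction ?_ ?_ ?_ ?_ ha
    · rintro _ ⟨o, rfl⟩
      rcases o with _ | t
      · change _ * (1 : A) ∈ S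
        rw [mul_one]
        exact hX _
      · obtain ⟨z, v, h⟩ := hrel s t
        have h2 := h
        simp only [map_mul] at h2
        change q _ * q _ ∈ S
        rw [h2]
        exact hXz z _ (hX v)
    · rw [mul_zero]; exact S.zero_mem
    · intro x y _ _ hx hy
      rw [mul_add]; exact S.add_mem hx hy
    · intro r x _ hx
      rw [mul_smul_comm]; exact S.smul_mem _ hx
  have hsp : ⊤ ≤ S := by
    intro a _
    obtain ⟨p, rfl⟩ := hq a
    induction p using MvPolynomial.induction_on with
    | C r =>
      have := S.smul_mem (C r) (hcS none)
      rw [Algebra.smul_def, hκ, rename_C] at this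
      change _ * (1 : A) ∈ S at this
      rwa [mul_one] at this
    | add p p' hp hq =>
      rw [map_add]
      exact S.add_mem (hp trivial) (hq trivial)
    | mul_X p j hp =>
      rw [map_mul, mul_comm]
      obtain ⟨x, rfl⟩ := w.symm.surjective j
      rcases x with s | z
      · exact hXs s _ (hp trivial)
      · exact hXz z _ (hp trivial)
  let c : Module.Basis (Option (Fin N)) (MvPolynomial σ K) A := Module.Basis.mk hli hsp
  have hc : ∀ o, c o = c0 o := fun o => by simp [c]
  let e : MvPolynomial ι K ≃ₐ[K] MvPolynomial (Fin N) (MvPolynomial σ K) :=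
    (renameEquiv K w).trans (sumAlgEquiv K (Fin N) σ)
  have heX : ∀ s, e.symm (X s) = X (w.symm (Sum.inl s)) := by
    intro s
    rw [AlgEquiv.symm_apply_eq]
    simp [e]
  have heC : ∀ z, e.symm (C (X z)) = X (w.symm (Sum.inr z)) := by
    intro s
    rw [AlgEquiv.symm_apply_eq]
    simp [e]
  refine poly_main (A := A) (M := M) (Ideal.span (Set.range X)) e.toRingEquiv c (hc none) ?_ ?_
    ε ?_ i
  · intro k
    change e.symm (X k) ∈ _
    rw [heX]
    exact Ideal.subset_span ⟨_, rfl⟩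
  · intro k l
    obtain ⟨z, v, h⟩ := hrel k l
    refine ⟨X z, q (X v), ?_, ?_⟩
    · change e.symm (C (X z)) ∈ _
      rw [heC]
      exact Ideal.subset_span ⟨_, rfl⟩
    · rw [hc, hc, hκ, rename_X]
      have h2 := h
      simp only [map_mul] at h2
      exact h2
  · intro r a
    have : (((eval (fun k => c (some k))).comp (map (algebraMap (MvPolynomial σ K) A))).comp
        e.toRingEquiv.toRingHom) = q := by
      apply MvPolynomial.ringHom_ext
      · intro r
        have : e (C r) = C (C r) := by simp [e]
        change MvPolynomial.eval _ (MvPolynomial.map _ (e (C r))) = _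
        rw [this, map_C, eval_C, hκ, rename_C]
      · intro j
        change MvPolynomial.eval _ (MvPolynomial.map _ (e (X j))) = _
        obtain ⟨x, rfl⟩ := w.symm.surjective j
        rcases x with s | z
        · rw [← heX, AlgEquiv.apply_symm_apply, map_X, eval_X, hc, heX]
          rfl
        · rw [← heC, AlgEquiv.apply_symm_apply, map_C, eval_C, hκ, rename_X, heC]
          rfl
    have h := DFunLike.congr_fun this r
    have h' : eval (fun k => c (some k)) (map (algebraMap (MvPolynomial σ K) A) (e r)) = q r := h
    change ε (eval (fun k => c (some k)) (map (algebraMap (MvPolynomial σ K) A) (e r)) * a) = _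
    rw [h', hε]

theorem mv_main {K : Type u} [Field K] {ι σ : Type} {N : ℕ} (w : ι ≃ Fin N ⊕ σ)
    (I : Ideal (MvPolynomial ι K))
    (hrel : ∀ s t : Fin N, ∃ z : σ, ∃ q : ι, X (w.symm (Sum.inl s)) * X (w.symm (Sum.inl t)) -
      X (w.symm (Sum.inr z)) * X q ∈ I)
    {D Γ : Type*} [CommRing D] [IsDomain D] [Algebra K D] [AddCommMonoid Γ]
    (β : MvPolynomial σ K →ₐ[K] D) (hβ : Function.Injective β)
    (τ : MvPolynomial ι K →ₐ[K] AddMonoidAlgebra D Γ) (hI : ∀ p ∈ I, τ p = 0)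
    (hτz : ∀ z, τ (X (w.symm (Sum.inr z))) = AddMonoidAlgebra.single 0 (β (X z)))
    (γ : Option (Fin N) → Γ) (hγ : Function.Injective γ) (hγ0 : γ none = 0)
    (d : Fin N → D) (hd : ∀ s, d s ≠ 0)
    (hτs : ∀ s, τ (X (w.symm (Sum.inl s))) = AddMonoidAlgebra.single (γ (some s)) (d s)) (i : ℕ) :
    Nonempty ((((Tor (ModuleCat.{u} (MvPolynomial ι K)) i).obj (ModuleCat.of _
      (MvPolynomial ι K ⧸ (Ideal.span (Set.range X) : Ideal (MvPolynomial ι K))))).obj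
        (ModuleCat.of _ (MvPolynomial ι K ⧸ I)) : ModuleCat.{u} (MvPolynomial ι K))
      ≃ₗ[MvPolynomial ι K] (Fin (if i = 0 then 1 else i * Nat.choose (N + 1) (i + 1)) →
        MvPolynomial ι K ⧸ (Ideal.span (Set.range X) : Ideal (MvPolynomial ι K)))) := by
  refine mv_main' w (Ideal.Quotient.mk I) Ideal.Quotient.mk_surjective
    (AddEquiv.refl (MvPolynomial ι K ⧸ I)) ?_ ?_ β hβ τ (Ideal.Quotient.lift I τ.toRingHom hI)
    (fun p => rfl) hτz γ hγ hγ0 d hd hτs i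
  · intro r a
    obtain ⟨p, rfl⟩ := Ideal.Quotient.mk_surjective a
    rfl
  · intro s t
    obtain ⟨z, v, h⟩ := hrel s t
    exact ⟨z, v, Ideal.Quotient.eq.2 h⟩

end Helpers5

theorem fin_facts {n : ℕ} [NeZero n] (hn : 3 ≤ n) (a : Fin n) :
    a ≠ a + 1 ∧ a ≠ a + 1 + 1 ∧ a + 1 ≠ a + 1 + 1 := by
  obtain ⟨N, rfl⟩ : ∃ N, n = N + 3 := ⟨n - 3, by omega⟩
  have h1 : (1 : Fin (N + 3)) ≠ 0 := by
    intro h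
    have := congrArg Fin.val h
    simp at this
  have h2 : (1 + 1 : Fin (N + 3)) ≠ 0 := by
    intro h
    have := congrArg Fin.val h
    rw [Fin.val_add] at this
    simp at this
    rw [Nat.mod_eq_of_lt (by omega)] at this
    omega
  refine ⟨?_, ?_, ?_⟩
  · intro h; exact h1 (left_eq_add.1 h)
  · intro h; rw [add_assoc] at h; exact h2 (left_eq_add.1 h)
  · intro h; exact h1 (left_eq_add.1 h)

theorem cycLap_eq {n : ℕ} [NeZero n] (hn : 3 ≤ n) (a : Fin n) :
    cycLap n (a + 1) = (2 : ℤ) • Pi.single (a + 1) 1 - Pi.single (a + 1 + 1) 1 -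
      Pi.single a (1 : ℤ) := by
  obtain ⟨h1, h2, h3⟩ := fin_facts hn a
  funext l
  simp only [cycLap, Pi.sub_apply, Pi.smul_apply, Pi.single_apply, add_left_inj, smul_eq_mul]
  by_cases e1 : l = a + 1
  · subst e1
    simp [h1.symm, h3]
  · by_cases e2 : l = a + 1 + 1
    · subst e2
      simp [h2.symm, h3.symm]
    · by_cases e3 : l = a
      · subst e3
        simp [h1, h2]
      · simp [e1, e2, e3, Ne.symm e3]

theorem latt_mem {n : ℕ} [NeZero n] (hn : 3 ≤ n) (a b : Fin n) :
    (Pi.single a 1 + Pi.single b 1 - (Pi.single 0 1 + Pi.single (a + b) 1) : Fin n → ℤ) ∈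
      Submodule.span ℤ (Set.range (cycLap n)) := by
  set L := Submodule.span ℤ (Set.range (cycLap n)) with hL
  let s : Fin n → Fin n → ℤ := fun a => Pi.single a 1
  have hE : ∀ k : ℕ, s ((k • (1 : Fin n)) + 1) - s (k • 1) - s 1 + s 0 ∈ L := by
    intro k
    induction k with
    | zero => simp
    | succ k ih =>
      have h1 : cycLap n (k • (1 : Fin n) + 1) ∈ L := Submodule.subset_span ⟨_, rfl⟩
      have h2 := L.sub_mem ih h1
      rw [cycLap_eq hn] at h2
      rw [succ_nsmul]
      convert h2 using 1
      simp only [s]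
      module
  have hsm : ∀ a : Fin n, ∃ k : ℕ, a = k • (1 : Fin n) := by
    obtain ⟨N, rfl⟩ : ∃ N, n = N + 1 := ⟨n - 1, by omega⟩
    intro a
    refine Fin.induction ⟨0, by simp⟩ ?_ a
    rintro i ⟨k, hk⟩
    refine ⟨k + 1, ?_⟩
    rw [succ_nsmul, ← hk, Fin.coeSucc_eq_succ]
  have hE' : ∀ a : Fin n, s (a + 1) - s a - s 1 + s 0 ∈ L := by
    intro a
    obtain ⟨k, rfl⟩ := hsm a
    exact hE k
  have hF : ∀ k : ℕ, s (a + k • (1 : Fin n)) - s a - s (k • 1) + s 0 ∈ L := by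
    intro k
    induction k with
    | zero => simp
    | succ k ih =>
      have h1 := hE' (a + k • 1)
      have h2 := hE k
      have h3 := L.sub_mem (L.add_mem ih h1) h2
      rw [succ_nsmul, ← add_assoc]
      convert h3 using 1
      module
  obtain ⟨k, hk⟩ := hsm b
  have := L.neg_mem (hF k)
  rw [← hk] at this
  convert this using 1
  simp only [s]
  module

theorem lattice_rel {n : ℕ} (K : Type*) [Field K] [NeZero n] (hn : 3 ≤ n) (a b : Fin n) :
    (X a * X b - X 0 * X (a + b) : MvPolynomial (Fin n) K) ∈
      latticeIdeal n K (Submodule.span ℤ (Set.range (cycLap n))) := by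
  have hp : ∀ a b : Fin n, (X a * X b : MvPolynomial (Fin n) K) =
      ∏ i, X i ^ (Pi.single a 1 + Pi.single b 1 : Fin n → ℕ) i := by
    intro a b
    simp only [Pi.add_apply, pow_add, Finset.prod_mul_distrib, Pi.single_apply]
    simp [pow_ite]
  rw [hp a b, hp 0 (a + b)]
  refine Ideal.subset_span ⟨_, _, ?_, rfl⟩
  convert latt_mem hn a b using 1
  funext i
  simp [Pi.single_apply]

theorem prod_single {ι D Γ : Type*} [CommRing D] [AddCommMonoid Γ] (S : Finset ι) (g : ι → Γ)
    (h : ι → D) : ∏ i ∈ S, AddMonoidAlgebra.single (g i) (h i) =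
      AddMonoidAlgebra.single (∑ i ∈ S, g i) (∏ i ∈ S, h i) := by
  classical
  induction S using Finset.induction_on with
  | empty => simp; rfl
  | insert a S ha ih =>
    rw [Finset.prod_insert ha, Finset.sum_insert ha, Finset.prod_insert ha, ih,
      AddMonoidAlgebra.single_mul_single]

theorem lattice_sum {n : ℕ} [NeZero n] (hn : 3 ≤ n) {V : Type*} [AddCommGroup V] (f : Fin n → V)
    (hf : ∀ a, f (a + 1 + 1) + f a = (2 : ℤ) • f (a + 1)) (u v : Fin n → ℕ)
    (h : ((fun i => (u i : ℤ)) - fun i => (v i : ℤ)) ∈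
      Submodule.span ℤ (Set.range (cycLap n))) : ∑ i, u i • f i = ∑ i, v i • f i := by
  have h1 : Submodule.span ℤ (Set.range (cycLap n)) ≤
      LinearMap.ker (Fintype.linearCombination ℤ f) := by
    rw [Submodule.span_le]
    rintro _ ⟨j, rfl⟩
    have hj : j = (j - 1) + 1 := by simp
    rw [hj, cycLap_eq hn]
    simp only [SetLike.mem_coe, LinearMap.mem_ker, map_sub, map_smul,
      Fintype.linearCombination_apply_single, one_smul]
    rw [← hf]
    abel
  have h2 := h1 h
  rw [LinearMap.mem_ker, map_sub, sub_eq_zero] at h2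
  simpa [Fintype.linearCombination_apply] using h2

open CategoryTheory in
theorem cyc_main (K : Type*) [Field K] (N : ℕ) (hn : 3 ≤ N + 1) (i : ℕ) :
    Nonempty ((TorKN (N + 1) K i
          (latticeIdeal (N + 1) K (Submodule.span ℤ (Set.range (cycLap (N + 1))))))
        ≃ₗ[MvPolynomial (Fin (N + 1)) K]
        (Fin (if i = 0 then 1 else i * Nat.choose (N + 1) (i + 1)) →
          MvPolynomial (Fin (N + 1)) K ⧸ (Ideal.span (Set.range X) :
            Ideal (MvPolynomial (Fin (N + 1)) K)))) := by
  let w : Fin (N + 1) ≃ Fin N ⊕ Unit := (finSuccEquiv N).trans (Equiv.optionEquivSumPUnit _)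
  have hw1 : ∀ s, w.symm (Sum.inl s) = s.succ := fun s => by simp [w]
  have hw2 : ∀ z, w.symm (Sum.inr z) = 0 := fun z => by simp [w]
  let τ : MvPolynomial (Fin (N + 1)) K →ₐ[K]
      AddMonoidAlgebra (MvPolynomial Unit K) (Fin (N + 1)) :=
    aeval fun i => AddMonoidAlgebra.single i (X ())
  have hτX : ∀ i, τ (X i) = AddMonoidAlgebra.single i (X ()) := fun i => by simp [τ]
  refine mv_main w _ ?_ (AlgHom.id K (MvPolynomial Unit K)) (fun _ _ h => h) τ ?_ ?_
    (fun o => o.elim 0 Fin.succ) ?_ rfl (fun _ => X ()) (fun _ => X_ne_zero _) ?_ i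
  · intro s t
    refine ⟨(), s.succ + t.succ, ?_⟩
    rw [hw1, hw1, hw2]
    exact lattice_rel K hn _ _
  · intro p hp
    have : latticeIdeal (N + 1) K (Submodule.span ℤ (Set.range (cycLap (N + 1)))) ≤
        RingHom.ker τ.toRingHom := by
      refine Ideal.span_le.2 ?_
      rintro _ ⟨u, v, huv, rfl⟩
      change τ _ = 0
      have h : ∀ u : Fin (N + 1) → ℕ, τ (∏ i, X i ^ u i) =
          AddMonoidAlgebra.single (∑ i, u i • i) (X () ^ ∑ i, u i) := by
        intro u
        simp only [map_prod, map_pow, hτX, AddMonoidAlgebra.single_pow]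
        rw [prod_single, Finset.prod_pow_eq_pow_sum]
      rw [map_sub, h, h]
      have h1 := lattice_sum hn (fun _ => (1 : ℤ)) (by intro a; norm_num) u v huv
      have h2 := lattice_sum hn (fun i => i) (by intro a; rw [two_smul]; abel) u v huv
      rw [h2]
      have h3 : ∑ i, u i = ∑ i, v i := by
        simp only [nsmul_eq_mul, mul_one] at h1
        exact_mod_cast h1
      rw [h3, sub_self]
    exact this hp
  · intro z
    rw [hw2, hτX]
    rfl
  · rintro (_ | s) (_ | t) h
    · rfl
    · exact absurd h.symm (Fin.succ_ne_zero _)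
    · exact absurd h (Fin.succ_ne_zero _)
    · rw [Fin.succ_injective _ h]
  · intro s
    rw [hw1, hτX]
    rfl

theorem rnc_low {A : Type*} [CommRing A] (n : ℕ) (y : ℕ → A)
    (h : ∀ i j, i + 1 ≤ j → j + 1 ≤ n → y (i + 1) * y j = y i * y (j + 1)) (i : ℕ) :
    ∀ j, i ≤ j → i + j ≤ n → y i * y j = y 0 * y (i + j) := by
  induction i with
  | zero => intro j _ _; rw [zero_add]
  | succ i ih =>
    intro j hij hn
    rw [h i j hij (by omega), ih (j + 1) (by omega) (by omega)]
    congr 2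
    omega

theorem rnc_high {A : Type*} [CommRing A] (n : ℕ) (y : ℕ → A)
    (h : ∀ i j, i + 1 ≤ j → j + 1 ≤ n → y (i + 1) * y j = y i * y (j + 1)) (k : ℕ) :
    ∀ i j, i ≤ j → j + k = n → n ≤ i + j → y i * y j = y n * y (i + j - n) := by
  induction k with
  | zero =>
    intro i j _ hj _
    obtain rfl : j = n := by omega
    rw [mul_comm, Nat.add_sub_cancel]
  | succ k ih =>
    intro i j hij hj hn
    obtain ⟨i, rfl⟩ : ∃ i', i = i' + 1 := ⟨i - 1, by omega⟩
    rw [h i j hij (by omega), ih i (j + 1) (by omega) (by omega) (by omega)]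
    congr 2
    omega

theorem rnc_rel (K : Type*) [Field K] (n : ℕ) (i j : ℕ) (hi : i ≤ n) (hj : j ≤ n) :
    ∃ z : Bool, ∃ v : Fin (n + 1), (X (xIdx n (i + 1)) * X (xIdx n (j + 1)) -
      X (if z then Fin.last n else 0) * X v : MvPolynomial (Fin (n + 1)) K) ∈ Pideal n K := by
  wlog hij : i ≤ j generalizing i j
  · obtain ⟨z, v, h⟩ := this j i hj hi (by omega)
    refine ⟨z, v, ?_⟩
    rwa [mul_comm (X (xIdx n (j + 1)))] at h
  let y : ℕ → MvPolynomial (Fin (n + 1)) K ⧸ Pideal n K := fun k =>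
    Ideal.Quotient.mk _ (X (xIdx n (k + 1)))
  have hy : ∀ i j, i + 1 ≤ j → j + 1 ≤ n → y (i + 1) * y j = y i * y (j + 1) := by
    intro i j h1 h2
    simp only [y, ← map_mul]
    refine Ideal.Quotient.eq.2 (Ideal.subset_span ⟨i + 1 + 1, j + 1, by omega, by omega, h2, ?_⟩)
    rfl
  by_cases hn : i + j ≤ n
  · refine ⟨false, xIdx n (i + j + 1), ?_⟩
    have := rnc_low n y hy i j hij hn
    simp only [y, ← map_mul] at this
    have h2 := Ideal.Quotient.eq.1 this
    have h0 : xIdx n (0 + 1) = 0 := by simp [xIdx]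
    rw [h0] at h2
    simpa using h2
  · refine ⟨true, xIdx n (i + j - n + 1), ?_⟩
    have := rnc_high n y hy (n - j) i j hij (by omega) (by omega)
    simp only [y, ← map_mul] at this
    have h2 := Ideal.Quotient.eq.1 this
    have h0 : xIdx n (n + 1) = Fin.last n := by
      apply Fin.ext
      simp [xIdx]
    rw [h0] at h2
    simpa using h2

open CategoryTheory in
theorem rnc_main (K : Type*) [Field K] (N : ℕ) (i : ℕ) :
    Nonempty ((TorKN (N + 1 + 1) K i (Pideal (N + 1) K))
        ≃ₗ[MvPolynomial (Fin (N + 1 + 1)) K]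
        (Fin (if i = 0 then 1 else i * Nat.choose (N + 1) (i + 1)) →
          MvPolynomial (Fin (N + 1 + 1)) K ⧸ (Ideal.span (Set.range X) :
            Ideal (MvPolynomial (Fin (N + 1 + 1)) K)))) := by
  let f : Fin N ⊕ Bool → Fin (N + 1 + 1) := Sum.elim (fun s => s.succ.castSucc)
    (fun z => if z then Fin.last (N + 1) else 0)
  have hf : Function.Bijective f := by
    rw [Fintype.bijective_iff_injective_and_card]
    constructor
    · rintro (s | z) (t | z') h
      · have := congrArg Fin.val h
        simp [f] at this
        rw [Fin.ext this]
      · have h' := congrArg Fin.val h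
        have := s.2
        cases z' <;> simp [f] at h'
        omega
      · have h' := congrArg Fin.val h
        have := t.2
        cases z <;> simp [f] at h'
        omega
      · have h' := congrArg Fin.val h
        cases z <;> cases z' <;> simp [f] at h' ⊢
    · simp
  let w : Fin (N + 1 + 1) ≃ Fin N ⊕ Bool := (Equiv.ofBijective f hf).symm
  have hw1 : ∀ s, w.symm (Sum.inl s) = s.succ.castSucc := fun s => rfl
  have hw2 : ∀ z, w.symm (Sum.inr z) = if z then Fin.last (N + 1) else 0 := fun z => rfl
  let D := MvPolynomial Bool K
  let τ : MvPolynomial (Fin (N + 1 + 1)) K →ₐ[K] AddMonoidAlgebra (MvPolynomial Bool K)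
      (ZMod (N + 1)) :=
    aeval fun i => AddMonoidAlgebra.single ((i : ℕ) : ZMod (N + 1))
      (X false ^ (N + 1 - (i : ℕ)) * X true ^ (i : ℕ))
  have hτX : ∀ i, τ (X i) = AddMonoidAlgebra.single ((i : ℕ) : ZMod (N + 1))
      (X false ^ (N + 1 - (i : ℕ)) * X true ^ (i : ℕ)) := fun i => by simp [τ]
  refine mv_main w _ ?_ (expand (N + 1) (R := K) (σ := Bool)) (expand_injective (by omega)) τ ?_ ?_
    (fun o => o.elim 0 (fun s => ((s + 1 : ℕ) : ZMod (N + 1)))) ?_ rfl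
    (fun s => X false ^ (N + 1 - (s + 1 : ℕ)) * X true ^ (s + 1 : ℕ))
    (fun s => mul_ne_zero (pow_ne_zero _ (X_ne_zero _)) (pow_ne_zero _ (X_ne_zero _))) ?_ i
  · intro s t
    obtain ⟨z, v, h⟩ := rnc_rel K (N + 1) (s + 1) (t + 1) (by omega) (by omega)
    refine ⟨z, v, ?_⟩
    rw [hw1, hw1, hw2]
    have hx : ∀ s : Fin N, xIdx (N + 1) (s + 1 + 1) = s.succ.castSucc := by
      intro s
      apply Fin.ext
      simp only [xIdx, Fin.val_castSucc, Fin.val_succ, Nat.add_sub_cancel]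
      exact Nat.mod_eq_of_lt (by omega)
    rwa [hx, hx] at h
  · intro p hp
    have : Pideal (N + 1) K ≤ RingHom.ker τ.toRingHom := by
      refine Ideal.span_le.2 ?_
      rintro _ ⟨a, b, ha, hab, hb, rfl⟩
      change τ _ = 0
      have hv : ∀ k, k + 1 ≤ N + 1 + 1 → ((xIdx (N + 1) (k + 1)) : ℕ) = k := by
        intro k hk
        simp only [xIdx, Nat.add_sub_cancel]
        exact Nat.mod_eq_of_lt (by omega)
      obtain ⟨a, rfl⟩ : ∃ a', a = a' + 1 + 1 := ⟨a - 2, by omega⟩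
      obtain ⟨b, rfl⟩ : ∃ b', b = b' + 1 := ⟨b - 1, by omega⟩
      rw [map_sub, map_mul, map_mul, hτX, hτX, hτX, hτX, Nat.add_sub_cancel, hv _ (by omega),
        hv _ (by omega), hv _ (by omega), hv _ (by omega), AddMonoidAlgebra.single_mul_single,
        AddMonoidAlgebra.single_mul_single, sub_eq_zero]
      congr 1
      · push_cast; ring
      · obtain ⟨c, rfl⟩ : ∃ c, N = b + c := ⟨N - b, by omega⟩
        obtain ⟨e, rfl⟩ : ∃ e, b = a + e := ⟨b - a, by omega⟩
        have e1 : a + e + c + 1 - (a + 1) = e + c := by omega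
        have e2 : a + e + c + 1 - (a + e) = c + 1 := by omega
        have e3 : a + e + c + 1 - a = e + c + 1 := by omega
        have e4 : a + e + c + 1 - (a + e + 1) = c := by omega
        rw [e1, e2, e3, e4]
        ring
    exact this hp
  · intro z
    rw [hw2, hτX]
    cases z
    · simp
    · simp
  · have hc : ∀ k l : ℕ, k < N + 1 → l < N + 1 → ((k : ZMod (N + 1)) = l) → k = l := by
      intro k l hk hl h
      rw [ZMod.natCast_eq_natCast_iff'] at h
      rwa [Nat.mod_eq_of_lt hk, Nat.mod_eq_of_lt hl] at h
    rintro (_ | s) (_ | t) h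
    · rfl
    · have := hc 0 (t + 1) (by omega) (by omega) (by simpa using h)
      omega
    · have := hc (s + 1) 0 (by omega) (by omega) (by simpa using h)
      omega
    · have := hc (s + 1) (t + 1) (by omega) (by omega) h
      rw [Fin.ext (show s.1 = t.1 by omega)]
  · intro s
    rw [hw1, hτX]
    rfl

/-- `R_n/I_{C_n}` and `R_{n+1}/P_n` have the same Betti table:
`β_0 = 1` on both sides, and `β_i = i·C(n, i+1)` for `i ≥ 1` (which vanishes for
`i ≥ n`).  A Betti number `β_i(N) = b` is expressed by `Tor_i^R(R/𝔪, N) ≅ (R/𝔪)^b`. -/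
theorem statement_11 (K : Type*) [Field K] (n : ℕ) [NeZero n] (hn : 3 ≤ n) :
    (∀ i : ℕ,
      Nonempty ((TorKN n K i
          (latticeIdeal n K (Submodule.span ℤ (Set.range (cycLap n)))))
        ≃ₗ[MvPolynomial (Fin n) K]
        (Fin (if i = 0 then 1 else i * Nat.choose n (i + 1)) →
          MvPolynomial (Fin n) K ⧸ (Ideal.span (Set.range X) :
            Ideal (MvPolynomial (Fin n) K))))) ∧
    (∀ i : ℕ,
      Nonempty ((TorKN (n + 1) K i (Pideal n K))
        ≃ₗ[MvPolynomial (Fin (n + 1)) K]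
        (Fin (if i = 0 then 1 else i * Nat.choose n (i + 1)) →
          MvPolynomial (Fin (n + 1)) K ⧸ (Ideal.span (Set.range X) :
            Ideal (MvPolynomial (Fin (n + 1)) K))))) := by
  obtain ⟨N, rfl⟩ : ∃ N, n = N + 1 := ⟨n - 1, by omega⟩
  exact ⟨fun i => cyc_main K N hn i, fun i => rnc_main K N i⟩
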